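/- ∫₀¹ (x²/(1+x)) · ( ∫₀ˣ log(y)/(y−1) dy ) dx = ( −4·log(2)·(π²/6) + 8·ζ(3) − 3 )/8, where ζ(3) = Σ_{k=1}^{∞} 1/k³. -/

import Mathlib

open MeasureTheory Real

lemma aux_image_exp : (fun x : ℝ => exp (-x)) '' Set.Ioi 0 = Set.Ioo (0:ℝ) 1 := by
  ext y
  simp only [Set.mem_image, Set.mem_Ioi, Set.mem_Ioo]
  constructor
  · rintro ⟨x, hx, rfl⟩
    exact ⟨exp_pos _, by simpa using hx⟩
  · rintro ⟨h0, h1⟩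
    exact ⟨-log y, by simpa using log_neg h0 h1, by simp [exp_log h0]⟩

lemma aux_mono (n k : ℕ) :
    ∫ y in Set.Ioo (0:ℝ) 1, y ^ n * (-log y) ^ k = k.factorial / ((n:ℝ) + 1) ^ (k + 1) := by
  rw [← aux_image_exp, integral_image_eq_integral_abs_deriv_smul (f' := fun x => -exp (-x))
    measurableSet_Ioi]
  · have h := integral_rpow_mul_exp_neg_mul_Ioi (a := (k:ℝ) + 1) (r := (n:ℝ) + 1)
      (by positivity) (by positivity)
    rw [Gamma_nat_eq_factorial] at h
    have h2 : (1 / ((n:ℝ) + 1)) ^ ((k:ℝ) + 1) * (k.factorial : ℝ)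
        = k.factorial / ((n:ℝ) + 1) ^ (k + 1) := by
      have : ((k:ℝ) + 1) = ((k + 1 : ℕ) : ℝ) := by push_cast; ring
      rw [this, rpow_natCast, div_pow, one_pow]; ring
    rw [← h2, ← h]
    refine setIntegral_congr_fun measurableSet_Ioi fun x hx => ?_
    simp only [abs_neg, abs_exp, smul_eq_mul, log_exp, neg_neg, add_sub_cancel_right, rpow_natCast]
    rw [← exp_nat_mul]
    have : exp (-((n + 1) * x)) = exp (-x) * exp (n * -x) := by rw [← exp_add]; ring_nf
    rw [this]; ring
  · intro x _
    have := ((hasDerivAt_id x).neg.exp).hasDerivWithinAt (s := Set.Ioi 0)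
    simpa using this
  · intro x _ y _ h
    simpa using h

lemma aux_mono_int (n k : ℕ) :
    IntegrableOn (fun y : ℝ => y ^ n * (-log y) ^ k) (Set.Ioo (0:ℝ) 1) := by
  refine Integrable.of_integral_ne_zero ?_
  rw [aux_mono]; positivity

lemma aux_summable (s : ℕ) (hs : 2 ≤ s) : Summable (fun n : ℕ => 1 / ((n:ℝ) + 1) ^ s) := by
  have := (summable_nat_add_iff 1).2 (Real.summable_one_div_nat_pow.2 (by omega : 1 < s))
  simpa using this

lemma aux_series (k : ℕ) (hk : 1 ≤ k) (c : ℕ → ℝ) (hc : ∀ n, |c n| ≤ 1) (h : ℝ → ℝ)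
    (hh : ∀ y ∈ Set.Ioo (0:ℝ) 1, HasSum (fun n => c n * y ^ n) (h y)) :
    HasSum (fun n : ℕ => c n * (k.factorial / ((n:ℝ) + 1) ^ (k + 1)))
      (∫ y in Set.Ioo (0:ℝ) 1, h y * (-log y) ^ k) := by
  have key := hasSum_integral_of_summable_integral_norm
    (μ := volume.restrict (Set.Ioo (0:ℝ) 1))
    (F := fun (n : ℕ) (y : ℝ) => c n * (y ^ n * (-log y) ^ k))
    (fun n => (aux_mono_int n k).const_mul _) ?_
  · convert! key using 1
    · ext n; rw [integral_const_mul, aux_mono]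
    · refine setIntegral_congr_fun measurableSet_Ioo fun y hy => ?_
      have := ((hh y hy).mul_right ((-log y) ^ k)).tsum_eq
      simp only [← this, mul_assoc]
  · have hS : Summable (fun n : ℕ => (k.factorial : ℝ) * (1 / ((n:ℝ) + 1) ^ (k + 1))) :=
      (aux_summable (k + 1) (by omega)).mul_left _
    refine hS.of_nonneg_of_le (fun n => integral_nonneg fun _ => norm_nonneg _) fun n => ?_
    have : ∫ y in Set.Ioo (0:ℝ) 1, ‖c n * (y ^ n * (-log y) ^ k)‖
        = |c n| * (k.factorial / ((n:ℝ) + 1) ^ (k + 1)) := by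
      rw [← aux_mono, ← integral_const_mul]
      refine setIntegral_congr_fun measurableSet_Ioo fun y hy => ?_
      have h1 := log_neg hy.1 hy.2
      have h2 : 0 ≤ y ^ n * (-log y) ^ k :=
        mul_nonneg (pow_nonneg hy.1.le _) (pow_nonneg (by linarith) _)
      simp only [norm_mul, Real.norm_eq_abs]
      rw [← abs_mul, abs_of_nonneg h2]
    rw [this, mul_one_div]
    exact mul_le_of_le_one_left (by positivity) (hc n)

lemma aux_evenodd (f : ℕ → ℝ) (hf : Summable f) :
    ∑' n, f n = ∑' n, f (2 * n) + ∑' n, f (2 * n + 1) := by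
  have e2 : Function.Injective (fun n : ℕ => 2 * n) := fun a b h => by simpa using h
  have o2 : Function.Injective (fun n : ℕ => 2 * n + 1) := fun a b h => by simpa using h
  have h := tsum_even_add_odd (f := f) (hf.comp_injective e2) (hf.comp_injective o2)
  exact h.symm

lemma aux_alt (s : ℕ) (hs : 2 ≤ s) : ∑' n : ℕ, (-1:ℝ) ^ n * (1 / ((n:ℝ) + 1) ^ s)
    = (1 - 2 / 2 ^ s) * ∑' n : ℕ, 1 / ((n:ℝ) + 1) ^ s := by
  have hS := aux_summable s hs
  have hA : Summable (fun n : ℕ => (-1:ℝ) ^ n * (1 / ((n:ℝ) + 1) ^ s)) := by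
    refine Summable.of_norm ?_
    refine hS.congr fun n => ?_
    rw [norm_mul, norm_pow, norm_neg, norm_one, one_pow, one_mul, Real.norm_eq_abs, abs_of_nonneg]
    positivity
  have h1 := aux_evenodd _ hS
  have h2 := aux_evenodd _ hA
  have h3 : ∑' n : ℕ, 1 / (((2 * n + 1 : ℕ) :ℝ) + 1) ^ s
      = 1 / 2 ^ s * ∑' n : ℕ, 1 / ((n:ℝ) + 1) ^ s := by
    rw [← tsum_mul_left]
    congr 1; ext n
    rw [div_mul_div_comm, one_mul, ← mul_pow]
    congr 2; push_cast; ring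
  have h4 : ∑' n : ℕ, (-1:ℝ) ^ (2 * n) * (1 / (((2 * n : ℕ) :ℝ) + 1) ^ s)
      = ∑' n : ℕ, (1 / (((2 * n : ℕ) :ℝ) + 1) ^ s) := by
    congr 1; ext n; rw [pow_mul]; simp
  have h5 : ∑' n : ℕ, (-1:ℝ) ^ (2 * n + 1) * (1 / (((2 * n + 1 : ℕ) :ℝ) + 1) ^ s)
      = - ∑' n : ℕ, (1 / (((2 * n + 1 : ℕ) :ℝ) + 1) ^ s) := by
    rw [← tsum_neg]
    congr 1; ext n; rw [pow_succ, pow_mul]; simp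
  rw [h4, h5, h3] at h2
  rw [h3] at h1
  rw [h2]
  linear_combination -h1

lemma aux_zeta2 : ∑' n : ℕ, 1 / ((n:ℝ) + 1) ^ 2 = π ^ 2 / 6 := by
  have := (hasSum_nat_add_iff' 1).2 hasSum_zeta_two
  simpa using this.tsum_eq

lemma aux_zeta3_pos : 0 < ∑' n : ℕ, 1 / ((n:ℝ) + 1) ^ 3 :=
  (aux_summable 3 (by norm_num)).tsum_pos (fun n => by positivity) 0 (by norm_num)

lemma aux_g : ∫ y in Set.Ioo (0:ℝ) 1, log y / (y - 1) = π ^ 2 / 6 := by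
  have := aux_series 1 le_rfl (fun _ => 1) (by simp) (fun y => (1 - y)⁻¹) (fun y hy => by
    simpa using hasSum_geometric_of_lt_one hy.1.le hy.2)
  rw [← aux_zeta2]
  have := this.tsum_eq
  simp only [one_mul, Nat.factorial_one, Nat.cast_one, pow_one, Nat.reduceAdd] at this
  rw [this]
  refine setIntegral_congr_fun measurableSet_Ioo fun y hy => ?_
  have : 1 - y ≠ 0 := by linarith [hy.2]
  have : y - 1 ≠ 0 := by linarith [hy.2]
  field_simp
  ring

lemma aux_g_int : IntegrableOn (fun y : ℝ => log y / (y - 1)) (Set.Ioo (0:ℝ) 1) := by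
  refine Integrable.of_integral_ne_zero ?_
  rw [aux_g]; positivity

lemma aux_log2 : ∫ y in Set.Ioo (0:ℝ) 1, log y ^ 2 / (1 - y)
    = 2 * ∑' n : ℕ, 1 / ((n:ℝ) + 1) ^ 3 := by
  have := aux_series 2 (by norm_num) (fun _ => 1) (by simp) (fun y => (1 - y)⁻¹) (fun y hy => by
    simpa using hasSum_geometric_of_lt_one hy.1.le hy.2)
  have := this.tsum_eq
  rw [← tsum_mul_left]
  simp only [one_mul, Nat.factorial_two, Nat.cast_ofNat, Nat.reduceAdd, mul_one_div] at this ⊢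
  rw [this]
  refine setIntegral_congr_fun measurableSet_Ioo fun y hy => ?_
  ring

lemma aux_log2' : ∫ y in Set.Ioo (0:ℝ) 1, log y ^ 2 / (1 + y)
    = 3 / 2 * ∑' n : ℕ, 1 / ((n:ℝ) + 1) ^ 3 := by
  have := aux_series 2 (by norm_num) (fun n => (-1) ^ n) (by simp) (fun y => (1 + y)⁻¹)
    (fun y hy => by
      have := hasSum_geometric_of_abs_lt_one (r := -y) (by rw [abs_neg, abs_of_pos hy.1]; exact hy.2)
      simpa [← mul_pow] using this)
  have := this.tsum_eq
  have h3 := aux_alt 3 (by norm_num)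
  have h4 : ∑' n : ℕ, (-1:ℝ) ^ n * ((Nat.factorial 2 : ℕ) / ((n:ℝ) + 1) ^ (2+1))
     = 2 * ∑' n : ℕ, (-1:ℝ) ^ n * (1 / ((n:ℝ) + 1) ^ 3) := by
    rw [← tsum_mul_left]
    congr 1; ext n; simp only [Nat.factorial_two, Nat.cast_ofNat]; ring
  rw [h4, h3] at this
  rw [show (3 / 2 * ∑' n : ℕ, 1 / ((n:ℝ) + 1) ^ 3) = 2 * ((1 - 2 / 2 ^ 3) * ∑' n : ℕ, 1 / ((n:ℝ) + 1) ^ 3) by ring, this]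
  refine setIntegral_congr_fun measurableSet_Ioo fun y hy => ?_
  ring

lemma aux_logm : ∫ y in Set.Ioo (0:ℝ) 1, log y ^ 2 / (1 - y ^ 2)
    = 7 / 4 * ∑' n : ℕ, 1 / ((n:ℝ) + 1) ^ 3 := by
  have h1 : IntegrableOn (fun y : ℝ => log y ^ 2 / (1 - y)) (Set.Ioo (0:ℝ) 1) := by
    refine Integrable.of_integral_ne_zero ?_
    rw [aux_log2]; have := aux_zeta3_pos; positivity
  have h2 : IntegrableOn (fun y : ℝ => log y ^ 2 / (1 + y)) (Set.Ioo (0:ℝ) 1) := by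
    refine Integrable.of_integral_ne_zero ?_
    rw [aux_log2']; have := aux_zeta3_pos; positivity
  have h3 := integral_add h1 h2
  rw [aux_log2, aux_log2'] at h3
  have h4 : ∫ y in Set.Ioo (0:ℝ) 1, log y ^ 2 / (1 - y ^ 2)
     = ∫ y in Set.Ioo (0:ℝ) 1, (1/2) * (log y ^ 2 / (1 - y) + log y ^ 2 / (1 + y)) := by
    refine setIntegral_congr_fun measurableSet_Ioo fun y hy => ?_
    have : 1 - y ≠ 0 := by linarith [hy.2]
    have : 1 + y ≠ 0 := by linarith [hy.1]
    have : 1 - y ^ 2 ≠ 0 := by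
      rw [show 1 - y ^ 2 = (1 - y) * (1 + y) by ring]; positivity
    field_simp
    ring
  rw [h4, integral_const_mul, h3]; ring

lemma aux_a2 : ∫ x in Set.Ioo (0:ℝ) 1, log (1 - x) ^ 2 / x
    = 2 * ∑' n : ℕ, 1 / ((n:ℝ) + 1) ^ 3 := by
  rw [← aux_log2]
  have him : (fun x : ℝ => 1 - x) '' Set.Ioo 0 1 = Set.Ioo (0:ℝ) 1 := by simp
  conv_rhs => rw [← him]
  rw [integral_image_eq_integral_abs_deriv_smul (f' := fun x => -1) measurableSet_Ioo]
  · simp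
  · intro x _
    simpa using ((hasDerivAt_id x).const_sub 1).hasDerivWithinAt
  · intro x _ y _ h
    simpa using h

lemma aux_apb2 : ∫ x in Set.Ioo (0:ℝ) 1, (log (1 - x) + log (1 + x)) ^ 2 / x
    = ∑' n : ℕ, 1 / ((n:ℝ) + 1) ^ 3 := by
  have him : (fun x : ℝ => x ^ 2) '' Set.Ioo 0 1 = Set.Ioo (0:ℝ) 1 := by
    ext y
    simp only [Set.mem_image, Set.mem_Ioo]
    constructor
    · rintro ⟨x, ⟨h0, h1⟩, rfl⟩
      exact ⟨by positivity, by nlinarith⟩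
    · rintro ⟨h0, h1⟩
      exact ⟨√y, ⟨sqrt_pos.2 h0, by rw [sqrt_lt' one_pos]; simpa using h1⟩, sq_sqrt h0.le⟩
  have h := aux_a2
  rw [← him, integral_image_eq_integral_abs_deriv_smul (f' := fun x => 2 * x) measurableSet_Ioo] at h
  · have : ∫ x in Set.Ioo (0:ℝ) 1, |2 * x| • (log (1 - x ^ 2) ^ 2 / x ^ 2)
      = ∫ x in Set.Ioo (0:ℝ) 1, 2 * ((log (1 - x) + log (1 + x)) ^ 2 / x) := by
      refine setIntegral_congr_fun measurableSet_Ioo fun x hx => ?_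
      have h0 := hx.1
      have h1 : 1 - x ≠ 0 := by linarith [hx.2]
      have h2 : 1 + x ≠ 0 := by linarith [hx.1]
      simp only [smul_eq_mul]
      rw [abs_of_pos (by linarith), show 1 - x ^ 2 = (1 - x) * (1 + x) by ring, log_mul h1 h2]
      field_simp
    rw [this, integral_const_mul] at h
    linarith
  · intro x _
    simpa using (hasDerivAt_pow 2 x).hasDerivWithinAt
  · intro x hx y hy h
    exact (pow_left_inj₀ hx.1.le hy.1.le two_ne_zero).1 h

lemma aux_amb2 : ∫ x in Set.Ioo (0:ℝ) 1, (log (1 - x) - log (1 + x)) ^ 2 / x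
    = 7 / 2 * ∑' n : ℕ, 1 / ((n:ℝ) + 1) ^ 3 := by
  have him : (fun x : ℝ => (1 - x) / (1 + x)) '' Set.Ioo 0 1 = Set.Ioo (0:ℝ) 1 := by
    have H : ∀ x ∈ Set.Ioo (0:ℝ) 1, (1 - x) / (1 + x) ∈ Set.Ioo (0:ℝ) 1 := by
      rintro x ⟨h0, h1⟩
      refine ⟨div_pos (by linarith) (by linarith), ?_⟩
      rw [div_lt_one (by linarith)]; linarith
    ext y
    simp only [Set.mem_image]
    constructor
    · rintro ⟨x, hx, rfl⟩
      exact H x hx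
    · intro hy
      refine ⟨_, H y hy, ?_⟩
      have : 1 + y ≠ 0 := by linarith [hy.1]
      field_simp
      ring
  have h := aux_logm
  rw [← him, integral_image_eq_integral_abs_deriv_smul (f' := fun x => -(2 / (1 + x) ^ 2))
    measurableSet_Ioo] at h
  · have : ∫ x in Set.Ioo (0:ℝ) 1, |-(2 / (1 + x) ^ 2)| •
        (log ((1 - x) / (1 + x)) ^ 2 / (1 - ((1 - x) / (1 + x)) ^ 2))
      = ∫ x in Set.Ioo (0:ℝ) 1, (1 / 2) * ((log (1 - x) - log (1 + x)) ^ 2 / x) := by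
      refine setIntegral_congr_fun measurableSet_Ioo fun x hx => ?_
      have h0 := hx.1
      have h1 : 1 - x ≠ 0 := by linarith [hx.2]
      have h2 : 1 + x ≠ 0 := by linarith [hx.1]
      simp only [smul_eq_mul]
      rw [abs_neg, abs_of_pos (by positivity), log_div h1 h2,
        show 1 - ((1 - x) / (1 + x)) ^ 2 = 4 * x / (1 + x) ^ 2 by field_simp; ring]
      field_simp
      ring
    rw [this, integral_const_mul] at h
    linarith
  · intro x hx
    have h2 : 1 + x ≠ 0 := by linarith [hx.1]
    have := (((hasDerivAt_id x).const_sub 1).div ((hasDerivAt_id x).const_add 1) h2)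
    have := this.hasDerivWithinAt (s := Set.Ioo 0 1)
    convert! this using 1
    simp only [id]
    field_simp
    ring
  · intro x hx y hy h
    have h2 : 1 + x ≠ 0 := by linarith [hx.1]
    have h3 : 1 + y ≠ 0 := by linarith [hy.1]
    simp only at h
    field_simp at h
    linarith

lemma aux_b2 : ∫ x in Set.Ioo (0:ℝ) 1, log (1 + x) ^ 2 / x
    = 1 / 4 * ∑' n : ℕ, 1 / ((n:ℝ) + 1) ^ 3 := by
  have hz := aux_zeta3_pos
  have i1 : IntegrableOn (fun x : ℝ => log (1 - x) ^ 2 / x) (Set.Ioo (0:ℝ) 1) :=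
    Integrable.of_integral_ne_zero (by rw [aux_a2]; positivity)
  have i2 : IntegrableOn (fun x : ℝ => (log (1 - x) + log (1 + x)) ^ 2 / x) (Set.Ioo (0:ℝ) 1) :=
    Integrable.of_integral_ne_zero (by rw [aux_apb2]; positivity)
  have i3 : IntegrableOn (fun x : ℝ => (log (1 - x) - log (1 + x)) ^ 2 / x) (Set.Ioo (0:ℝ) 1) :=
    Integrable.of_integral_ne_zero (by rw [aux_amb2]; positivity)
  have e1 := integral_sub ((i2.add i3).const_mul (1 / 2)) i1
  rw [integral_const_mul] at e1
  have e2 := integral_add i2 i3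
  simp only [Pi.add_apply] at e1
  rw [e2, aux_apb2, aux_amb2, aux_a2] at e1
  rw [show 1 / 4 * ∑' n : ℕ, 1 / ((n:ℝ) + 1) ^ 3 = 1 / 2 * (∑' n : ℕ, 1 / ((n:ℝ) + 1) ^ 3 +
    7 / 2 * ∑' n : ℕ, 1 / ((n:ℝ) + 1) ^ 3) - 2 * ∑' n : ℕ, 1 / ((n:ℝ) + 1) ^ 3 by ring, ← e1]
  congr 1; ext x; ring

/-- integration by parts against a primitive -/
lemma aux_parts (F f w : ℝ → ℝ) (hF : ContinuousOn F (Set.Icc 0 1))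
    (hFf : ∀ x ∈ Set.Ioo (0:ℝ) 1, HasDerivAt F (f x) x) (hf : ContinuousOn f (Set.Icc 0 1))
    (hw : IntegrableOn w (Set.Ioo (0:ℝ) 1)) (hwc : ContinuousOn w (Set.Ioo (0:ℝ) 1)) :
    ∫ x in (0:ℝ)..1, f x * (∫ y in (0:ℝ)..x, w y)
      = F 1 * (∫ y in Set.Ioo (0:ℝ) 1, w y) - ∫ y in Set.Ioo (0:ℝ) 1, F y * w y := by
  have hw' : IntervalIntegrable w volume 0 1 := by
    rw [intervalIntegrable_iff_integrableOn_Ioo_of_le zero_le_one]; exact hw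
  have h := intervalIntegral.integral_mul_deriv_eq_deriv_mul_of_hasDerivAt (a := 0) (b := 1)
    (u := fun x => ∫ y in (0:ℝ)..x, w y) (v := F) (u' := w) (v' := f) ?_ ?_ ?_ ?_ hw' ?_
  · simp only [intervalIntegral.integral_same, zero_mul, sub_zero] at h
    rw [intervalIntegral.integral_of_le zero_le_one (f := fun x => w x * F x),
      intervalIntegral.integral_of_le zero_le_one (f := w), integral_Ioc_eq_integral_Ioo,
      integral_Ioc_eq_integral_Ioo] at h
    simp only [mul_comm (F _), mul_comm (f _)]
    exact h
  · exact intervalIntegral.continuousOn_primitive_interval'  hw' (by simp)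
  · simpa using hF
  · intro x hx
    simp only [zero_le_one, inf_of_le_left, sup_of_le_right] at hx
    have hn : Set.Ioo (0:ℝ) 1 ∈ nhds x := isOpen_Ioo.mem_nhds hx
    refine intervalIntegral.integral_hasDerivAt_right ?_ ?_ (hwc.continuousAt hn)
    · refine hw'.mono_set ?_
      rw [Set.uIcc_of_le hx.1.le, Set.uIcc_of_le zero_le_one]
      exact Set.Icc_subset_Icc le_rfl hx.2.le
    · exact hwc.stronglyMeasurableAtFilter isOpen_Ioo x hx
  · intro x hx
    simp only [zero_le_one, inf_of_le_left, sup_of_le_right] at hx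
    exact hFf x hx
  · exact ContinuousOn.intervalIntegrable (by simpa using hf)

noncomputable def auxK (t : ℝ) : ℝ := ∫ y in Set.Ioo (0:ℝ) 1, (1 + t * y)⁻¹ * (-log y)

lemma aux_K (t : ℝ) (ht : t ∈ Set.Icc (0:ℝ) 1) :
    HasSum (fun n : ℕ => (-t) ^ n * (1 / ((n:ℝ) + 1) ^ 2)) (auxK t) := by
  have := aux_series 1 le_rfl (fun n => (-t) ^ n) (fun n => by
      rw [abs_pow, abs_neg, abs_of_nonneg ht.1]; exact pow_le_one₀ ht.1 ht.2)
    (fun y => (1 + t * y)⁻¹) (fun y hy => by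
      have h1 : |-(t * y)| < 1 := by
        rw [abs_neg, abs_of_nonneg (mul_nonneg ht.1 hy.1.le)]
        nlinarith [hy.1, hy.2, ht.1, ht.2]
      have := hasSum_geometric_of_abs_lt_one h1
      simp only [← mul_pow]
      simpa using this)
  simpa [auxK] using this

lemma aux_K1 : auxK 1 = π ^ 2 / 12 := by
  rw [← (aux_K 1 (by simp)).tsum_eq, aux_alt 2 le_rfl, aux_zeta2]; ring

lemma aux_pow (n : ℕ) (t : ℝ) (ht : 0 ≤ t) :
    ∫ u in Set.Ioo 0 t, u ^ n = t ^ (n + 1) / ((n:ℝ) + 1) := by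
  rw [← integral_Ioc_eq_integral_Ioo, ← intervalIntegral.integral_of_le ht, integral_pow]
  simp

lemma aux_pow_int (n : ℕ) (t : ℝ) : IntegrableOn (fun u : ℝ => u ^ n) (Set.Ioo 0 t) :=
  ((continuous_pow n).continuousOn.integrableOn_Icc (a := 0) (b := t)).mono_set
    Set.Ioo_subset_Icc_self

lemma aux_int_series (c : ℕ → ℝ) (t : ℝ) (ht0 : 0 ≤ t) (h : ℝ → ℝ)
    (hs : Summable (fun n => |c n| * (t ^ (n + 1) / ((n:ℝ) + 1))))
    (hh : ∀ u ∈ Set.Ioo 0 t, HasSum (fun n => c n * u ^ n) (h u)) :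
    HasSum (fun n : ℕ => c n * (t ^ (n + 1) / ((n:ℝ) + 1))) (∫ u in Set.Ioo 0 t, h u) := by
  have key := hasSum_integral_of_summable_integral_norm
    (μ := volume.restrict (Set.Ioo 0 t))
    (F := fun (n : ℕ) (y : ℝ) => c n * y ^ n)
    (fun n => (aux_pow_int n t).const_mul _) ?_
  · convert! key using 1
    · ext n; rw [integral_const_mul, aux_pow n t ht0]
    · refine setIntegral_congr_fun measurableSet_Ioo fun y hy => ?_
      exact (hh y hy).tsum_eq.symm
  · refine hs.congr fun n => ?_
    rw [← aux_pow n t ht0, ← integral_const_mul]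
    refine setIntegral_congr_fun measurableSet_Ioo fun y hy => ?_
    have h2 : 0 ≤ y ^ n := pow_nonneg hy.1.le _
    simp only [norm_mul, Real.norm_eq_abs, abs_of_nonneg h2]

lemma aux_intK : ∫ t in Set.Ioo (0:ℝ) 1, auxK t = 3 / 4 * ∑' n : ℕ, 1 / ((n:ℝ) + 1) ^ 3 := by
  have h := aux_int_series (fun n => (-1) ^ n * (1 / ((n:ℝ) + 1) ^ 2)) 1 zero_le_one auxK ?_ ?_
  · have h2 := aux_alt 3 (by norm_num)
    rw [← h.tsum_eq, show (3:ℝ) / 4 = 1 - 2 / 2 ^ 3 by norm_num, ← h2]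
    congr 1; ext n
    have : (n:ℝ) + 1 ≠ 0 := by positivity
    field_simp
    simp
  · refine (aux_summable 3 (by norm_num)).congr fun n => ?_
    rw [abs_mul, abs_pow, abs_neg, abs_one, one_pow, one_pow, one_mul, abs_of_pos (by positivity)]
    field_simp
  · intro u hu
    have := aux_K u ⟨hu.1.le, hu.2.le⟩
    convert! this using 1
    ext n
    rw [neg_pow u]; ring

lemma aux_L (t : ℝ) (ht : t ∈ Set.Ioc (0:ℝ) 1) :
    ∫ u in Set.Ioo 0 t, log (1 + u) / u = t * auxK t := by
  have h := aux_int_series (fun n => (-1) ^ n * (1 / ((n:ℝ) + 1))) t ht.1.le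
    (fun u => log (1 + u) / u) ?_ ?_
  · rw [← h.tsum_eq, ← (aux_K t ⟨ht.1.le, ht.2⟩).tsum_eq, ← tsum_mul_left]
    congr 1; ext n
    rw [neg_pow t]
    have : (n:ℝ) + 1 ≠ 0 := by positivity
    field_simp
    ring
  · refine (aux_summable 2 le_rfl).of_nonneg_of_le (fun n => ?_) (fun n => ?_)
    · have := ht.1
      positivity
    · rw [abs_mul, abs_pow, abs_neg, abs_one, one_pow, one_mul, abs_of_pos (by positivity),
        div_mul_div_comm, one_mul, ← pow_two]
      gcongr
      exact pow_le_one₀ ht.1.le ht.2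
  · intro u hu
    have hu1 : |-u| < 1 := by rw [abs_neg, abs_of_pos hu.1]; linarith [hu.2, ht.2]
    have := (hasSum_pow_div_log_of_abs_lt_one hu1).mul_left (-u⁻¹)
    convert! this using 1
    · ext n
      have := hu.1.ne'
      rw [pow_succ, neg_pow u]
      field_simp
    · rw [sub_neg_eq_add]; ring

lemma aux_w_int : IntegrableOn (fun u : ℝ => log (1 + u) / u) (Set.Ioo (0:ℝ) 1) := by
  refine Integrable.of_integral_ne_zero ?_
  rw [aux_L 1 (by simp), aux_K1]; positivity

lemma aux_LK : ∫ t in Set.Ioo (0:ℝ) 1, (1 + t)⁻¹ * (t * auxK t)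
    = log 2 * (π ^ 2 / 12) - 1 / 4 * ∑' n : ℕ, 1 / ((n:ℝ) + 1) ^ 3 := by
  have hne : ∀ x : ℝ, 0 ≤ x → 1 + x ≠ 0 := fun x hx => by positivity
  have h := aux_parts (fun x => log (1 + x)) (fun x => (1 + x)⁻¹) (fun u => log (1 + u) / u)
    ?_ ?_ ?_ aux_w_int ?_
  · rw [aux_L 1 (by simp), aux_K1, intervalIntegral.integral_of_le zero_le_one,
      integral_Ioc_eq_integral_Ioo] at h
    have e1 : ∫ t in Set.Ioo (0:ℝ) 1, (1 + t)⁻¹ * (t * auxK t)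
        = ∫ t in Set.Ioo (0:ℝ) 1, (1 + t)⁻¹ * ∫ u in (0:ℝ)..t, log (1 + u) / u := by
      refine setIntegral_congr_fun measurableSet_Ioo fun t ht => ?_
      rw [intervalIntegral.integral_of_le ht.1.le, integral_Ioc_eq_integral_Ioo,
        aux_L t ⟨ht.1, ht.2.le⟩]
    rw [e1, h, ← aux_b2]
    norm_num
    congr 1; ext x; ring
  · exact ContinuousOn.log (by fun_prop) fun x hx => hne x hx.1
  · intro x hx
    simpa using ((hasDerivAt_id x).const_add 1).log (hne x hx.1.le)
  · exact ContinuousOn.inv₀ (by fun_prop) fun x hx => hne x hx.1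
  · exact ContinuousOn.div (ContinuousOn.log (by fun_prop) fun x hx => hne x hx.1.le)
      (by fun_prop) fun x hx => hx.1.ne'

lemma aux_J : ∫ y in Set.Ioo (0:ℝ) 1, log (1 + y) * (log y / (y - 1))
    = π ^ 2 / 4 * log 2 - ∑' n : ℕ, 1 / ((n:ℝ) + 1) ^ 3 := by
  have hne : ∀ x : ℝ, 0 ≤ x → 1 + x ≠ 0 := fun x hx => by positivity
  have s1 : ∫ y in Set.Ioo (0:ℝ) 1, log (1 + y) * (log y / (y - 1))
      = ∫ y in Set.Ioo (0:ℝ) 1, ∫ t in Set.Ioo (0:ℝ) 1, (y / (1 + t * y)) * (log y / (y - 1)) := by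
    refine setIntegral_congr_fun measurableSet_Ioo fun y hy => ?_
    rw [integral_mul_const]
    congr 1
    rw [← integral_Ioc_eq_integral_Ioo, ← intervalIntegral.integral_of_le zero_le_one]
    have := intervalIntegral.integral_eq_sub_of_hasDerivAt (a := 0) (b := 1)
      (f := fun t => log (1 + t * y)) (f' := fun t => y / (1 + t * y)) ?_ ?_
    · rw [this]; simp
    · intro t ht
      rw [Set.uIcc_of_le zero_le_one] at ht
      simpa using (((hasDerivAt_id t).mul_const y).const_add 1).log
        (hne _ (mul_nonneg ht.1 hy.1.le))
    · refine ContinuousOn.intervalIntegrable ?_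
      rw [Set.uIcc_of_le zero_le_one]
      exact ContinuousOn.div (by fun_prop) (by fun_prop)
        fun t ht => hne _ (mul_nonneg ht.1 hy.1.le)
  have s2 : ∫ y in Set.Ioo (0:ℝ) 1, ∫ t in Set.Ioo (0:ℝ) 1, (y / (1 + t * y)) * (log y / (y - 1))
     = ∫ t in Set.Ioo (0:ℝ) 1, ∫ y in Set.Ioo (0:ℝ) 1, (y / (1 + t * y)) * (log y / (y - 1)) := by
    refine integral_integral_swap ?_
    have h1 : Integrable (fun z : ℝ × ℝ => log z.1 / (z.1 - 1) * (1:ℝ))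
        ((volume.restrict (Set.Ioo (0:ℝ) 1)).prod (volume.restrict (Set.Ioo (0:ℝ) 1))) :=
      Integrable.mul_prod (f := fun y : ℝ => log y / (y - 1)) (g := fun _ : ℝ => (1:ℝ))
        aux_g_int (integrable_const _)
    simp only [mul_one] at h1
    refine h1.bdd_mul (c := 1) (f := fun z : ℝ × ℝ => z.1 / (1 + z.2 * z.1)) ?_ ?_
    · exact Measurable.aestronglyMeasurable (by fun_prop)
    · rw [Measure.prod_restrict]
      filter_upwards [ae_restrict_mem (measurableSet_Ioo.prod measurableSet_Ioo)] with z hz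
      obtain ⟨⟨h1, h2⟩, ⟨h3, h4⟩⟩ := hz
      have : 0 < z.2 * z.1 := mul_pos h3 h1
      rw [Real.norm_eq_abs, abs_of_pos (by positivity), div_le_one (by positivity)]
      linarith
  have s3 : ∫ t in Set.Ioo (0:ℝ) 1, ∫ y in Set.Ioo (0:ℝ) 1, (y / (1 + t * y)) * (log y / (y - 1))
     = ∫ t in Set.Ioo (0:ℝ) 1, ((1 + t)⁻¹ * (π ^ 2 / 6) - auxK t + (1 + t)⁻¹ * (t * auxK t)) := by
    refine setIntegral_congr_fun measurableSet_Ioo fun t ht => ?_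
    have hk : IntegrableOn (fun y : ℝ => (1 + t * y)⁻¹ * (-log y)) (Set.Ioo (0:ℝ) 1) := by
      have h1 := aux_mono_int 0 1
      simp only [pow_zero, one_mul, pow_one] at h1
      refine Integrable.bdd_mul (c := 1) h1 ?_ ?_
      · exact Measurable.aestronglyMeasurable (by fun_prop)
      · filter_upwards [ae_restrict_mem measurableSet_Ioo] with y hy
        have : 0 < t * y := mul_pos ht.1 hy.1
        rw [Real.norm_eq_abs, abs_of_pos (by positivity)]
        exact inv_le_one_of_one_le₀ (by linarith)
    have e : ∫ y in Set.Ioo (0:ℝ) 1, (y / (1 + t * y)) * (log y / (y - 1))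
       = ∫ y in Set.Ioo (0:ℝ) 1, (1 + t)⁻¹ * (log y / (y - 1) - (1 + t * y)⁻¹ * (-log y)) := by
      refine setIntegral_congr_fun measurableSet_Ioo fun y hy => ?_
      have h1 : 1 + t * y ≠ 0 := hne _ (mul_nonneg ht.1.le hy.1.le)
      have h2 : 1 + t ≠ 0 := hne _ ht.1.le
      have h3 : y - 1 ≠ 0 := by linarith [hy.2]
      have h1' : 1 + y * t ≠ 0 := by rwa [mul_comm]
      field_simp
      ring
    rw [e, integral_const_mul, integral_sub aux_g_int hk, aux_g]
    have h2 : 1 + t ≠ 0 := hne _ ht.1.le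
    change (1 + t)⁻¹ * (π ^ 2 / 6 - auxK t) = _
    field_simp
    ring
  have i1 : IntegrableOn (fun t : ℝ => (1 + t)⁻¹) (Set.Ioo (0:ℝ) 1) :=
    (ContinuousOn.integrableOn_Icc (ContinuousOn.inv₀ (by fun_prop) fun x hx => hne x hx.1)).mono_set
      Set.Ioo_subset_Icc_self
  have i2 : IntegrableOn auxK (Set.Ioo (0:ℝ) 1) := by
    refine Integrable.of_integral_ne_zero ?_
    rw [aux_intK]; have := aux_zeta3_pos; positivity
  have i3 : IntegrableOn (fun t => (1 + t)⁻¹ * (t * auxK t)) (Set.Ioo (0:ℝ) 1) := by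
    have := Integrable.bdd_mul (c := 1) (f := fun t : ℝ => (1 + t)⁻¹ * t) i2
      (Measurable.aestronglyMeasurable (by fun_prop)) (by
        filter_upwards [ae_restrict_mem measurableSet_Ioo] with t ht
        have := ht.1
        rw [Real.norm_eq_abs, abs_of_pos (by positivity), ← div_eq_inv_mul,
          div_le_one (by positivity)]
        linarith)
    simp only [mul_assoc] at this
    exact this
  have e1 : ∫ t in Set.Ioo (0:ℝ) 1, (1 + t)⁻¹ = log 2 := by
    rw [← integral_Ioc_eq_integral_Ioo, ← intervalIntegral.integral_of_le zero_le_one]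
    have := intervalIntegral.integral_eq_sub_of_hasDerivAt (a := 0) (b := 1)
      (f := fun t => log (1 + t)) (f' := fun t => (1 + t)⁻¹) ?_ ?_
    · rw [this]; norm_num
    · intro t ht
      rw [Set.uIcc_of_le zero_le_one] at ht
      simpa using ((hasDerivAt_id t).const_add 1).log (hne _ ht.1)
    · rw [intervalIntegrable_iff_integrableOn_Ioo_of_le zero_le_one]; exact i1
  have i4 : IntegrableOn (fun t => (1 + t)⁻¹ * (π ^ 2 / 6) - auxK t) (Set.Ioo (0:ℝ) 1) :=
    (i1.mul_const _).sub i2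
  rw [s1, s2, s3, integral_add i4 i3, integral_sub (i1.mul_const _) i2,
    integral_mul_const, e1, aux_intK, aux_LK]
  ring

theorem integral_dilog_kernel_two :
    ∫ x in (0:ℝ)..1, (x ^ 2 / (1 + x)) * (∫ y in (0:ℝ)..x, Real.log y / (y - 1)) =
      (-4 * Real.log 2 * (π ^ 2 / 6) + 8 * (∑' k : ℕ, 1 / ((k : ℝ) + 1) ^ 3) - 3) / 8 := by
  have hne : ∀ x : ℝ, 0 ≤ x → 1 + x ≠ 0 := fun x hx => by positivity
  have h := aux_parts (fun x => (x ^ 2 / 2 - x) + log (1 + x)) (fun x => x ^ 2 / (1 + x))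
    (fun y => log y / (y - 1)) ?_ ?_ ?_ aux_g_int ?_
  · rw [h, aux_g]
    have m0 := aux_mono_int 0 1
    have m1 := aux_mono_int 1 1
    have v0 := aux_mono 0 1
    have v1 := aux_mono 1 1
    have iJ : IntegrableOn (fun y : ℝ => log (1 + y) * (log y / (y - 1))) (Set.Ioo (0:ℝ) 1) := by
      refine Integrable.bdd_mul (c := 1) aux_g_int
        (Measurable.aestronglyMeasurable (by fun_prop)) ?_
      filter_upwards [ae_restrict_mem measurableSet_Ioo] with y hy
      have h1 : 0 ≤ log (1 + y) := log_nonneg (by linarith [hy.1])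
      rw [Real.norm_eq_abs, abs_of_nonneg h1]
      have := log_le_sub_one_of_pos (x := 1 + y) (by linarith [hy.1])
      linarith [hy.2]
    have e : ∫ y in Set.Ioo (0:ℝ) 1, ((y ^ 2 / 2 - y) + log (1 + y)) * (log y / (y - 1))
      = ∫ y in Set.Ioo (0:ℝ) 1, ((1 / 2) * (y ^ 0 * (-log y) ^ 1 - y ^ 1 * (-log y) ^ 1)
        - (1 / 2) * (log y / (y - 1)) + log (1 + y) * (log y / (y - 1))) := by
      refine setIntegral_congr_fun measurableSet_Ioo fun y hy => ?_
      have h3 : y - 1 ≠ 0 := by linarith [hy.2]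
      field_simp
      ring
    have i1 : IntegrableOn (fun y : ℝ => (1 / 2) * (y ^ 0 * (-log y) ^ 1 - y ^ 1 * (-log y) ^ 1))
      (Set.Ioo (0:ℝ) 1) := (m0.sub m1).const_mul _
    have i2 : IntegrableOn (fun y : ℝ => (1 / 2) * (y ^ 0 * (-log y) ^ 1 - y ^ 1 * (-log y) ^ 1)
      - (1 / 2) * (log y / (y - 1))) (Set.Ioo (0:ℝ) 1) := i1.sub (aux_g_int.const_mul _)
    rw [e, integral_add i2 iJ, integral_sub i1 (aux_g_int.const_mul _), integral_const_mul,
      integral_const_mul, integral_sub m0 m1, v0, v1, aux_g, aux_J]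
    norm_num
    ring
  · exact ContinuousOn.add (by fun_prop) (ContinuousOn.log (by fun_prop) fun x hx => hne x hx.1)
  · intro x hx
    have h1 := hne x hx.1.le
    have a1 := (((hasDerivAt_id x).pow 2).div_const 2).sub (hasDerivAt_id x)
    have a2 := a1.add (((hasDerivAt_id x).const_add 1).log h1)
    convert! a2 using 1
    simp only [id]
    field_simp
    ring
  · exact ContinuousOn.div (by fun_prop) (by fun_prop) fun x hx => hne x hx.1
  · exact ContinuousOn.div (ContinuousOn.log (by fun_prop) fun x hx => hx.1.ne')
      (by fun_prop) fun x hx => by linarith [hx.2]
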